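/- Assume the dataset D has ℓ¹ diameter at most 1, and let μ_D and μ_{D'} be the measures on ℝ^d obtained from Lebesgue measure with densities p and q, respectively (the laws of a single draw of the mixup-plus-Laplacian-noise mechanism on D and on D' = D \ {x₀}). Then for every measurable set U ⊆ ℝ^d, μ_D(U) ≤ e^{A}·μ_{D'}(U) and μ_{D'}(U) ≤ e^{B}·μ_D(U), where A = log(1 − k/n + exp(1/(kσ))·k/n) and B = log(n/(n − k + k·exp(−1/(kσ)))); i.e., a single draw of the mechanism satisfies (max{A, B}, 0)-differential privacy with respect to removing x₀. -/

import Mathlib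

open Finset MeasureTheory

/-- The d-dimensional isotropic Laplacian density with scale σ. -/
noncomputable def laplacianDensity (d : ℕ) (σ : ℝ) (η : Fin d → ℝ) : ℝ :=
  ((2 * σ) ^ d)⁻¹ * Real.exp (-(∑ i, |η i|) / σ)

/-- The mixup-plus-noise output density of a finite dataset `P`. -/
noncomputable def mixupDensity (d : ℕ) (σ : ℝ) (k : ℕ) (P : Finset (Fin d → ℝ))
    (z : Fin d → ℝ) : ℝ :=
  ((P.card.choose k : ℝ))⁻¹ *
    ∑ S ∈ P.powersetCard k, laplacianDensity d σ (z - (k : ℝ)⁻¹ • ∑ x ∈ S, x)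

/-- The law of a single draw of the mixup-plus-Laplacian-noise mechanism on `P`:
Lebesgue measure with density `p_P`. -/
noncomputable def mixupLaw (d : ℕ) (σ : ℝ) (k : ℕ) (P : Finset (Fin d → ℝ)) :
    Measure (Fin d → ℝ) :=
  volume.withDensity fun z => ENNReal.ofReal (mixupDensity d σ k P z)

lemma mixup_double_count {α : Type*} [DecidableEq α] (E : Finset α) (j : ℕ) (f : Finset α → ℝ) :
    ∑ T ∈ E.powersetCard j, ∑ y ∈ E \ T, f (insert y T) =
      (j + 1 : ℝ) * ∑ S ∈ E.powersetCard (j + 1), f S := by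
  have h : (j + 1 : ℝ) * ∑ S ∈ E.powersetCard (j + 1), f S =
      ∑ S ∈ E.powersetCard (j + 1), ∑ y ∈ S, f S := by
    rw [Finset.mul_sum]
    refine Finset.sum_congr rfl fun S hS => ?_
    rw [Finset.mem_powersetCard] at hS
    rw [Finset.sum_const, hS.2, nsmul_eq_mul]
    push_cast
    ring
  rw [h, Finset.sum_sigma', Finset.sum_sigma']
  refine Finset.sum_bij' (fun p _ => ⟨insert p.2 p.1, p.2⟩) (fun p _ => ⟨p.1.erase p.2, p.2⟩)
    ?_ ?_ ?_ ?_ ?_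
  · rintro ⟨T, y⟩ h
    simp only [Finset.mem_sigma, Finset.mem_powersetCard, Finset.mem_sdiff] at h ⊢
    obtain ⟨⟨h1, h2⟩, h3, h4⟩ := h
    exact ⟨⟨Finset.insert_subset h3 h1, by rw [Finset.card_insert_of_notMem h4, h2]⟩,
      Finset.mem_insert_self _ _⟩
  · rintro ⟨S, y⟩ h
    simp only [Finset.mem_sigma, Finset.mem_powersetCard, Finset.mem_sdiff] at h ⊢
    obtain ⟨⟨h1, h2⟩, h3⟩ := h
    exact ⟨⟨(Finset.erase_subset _ _).trans h1, by rw [Finset.card_erase_of_mem h3, h2]; simp⟩,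
      h1 h3, Finset.notMem_erase _ _⟩
  · rintro ⟨T, y⟩ h
    simp only [Finset.mem_sigma, Finset.mem_sdiff] at h
    simp [Finset.erase_insert h.2.2]
  · rintro ⟨S, y⟩ h
    simp only [Finset.mem_sigma] at h
    simp [Finset.insert_erase h.2]
  · rintro ⟨T, y⟩ h
    rfl

lemma laplacian_shift (d : ℕ) (σ : ℝ) (hσ : 0 < σ) (k : ℝ) (hk : 0 < k) (u x y z : Fin d → ℝ)
    (h : ∑ i, |x i - y i| ≤ 1) :
    laplacianDensity d σ (z - k⁻¹ • (x + u)) ≤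
      Real.exp (1 / (k * σ)) * laplacianDensity d σ (z - k⁻¹ • (y + u)) := by
  unfold laplacianDensity
  have hc : (0 : ℝ) ≤ ((2 * σ) ^ d)⁻¹ := by positivity
  rw [mul_left_comm, ← Real.exp_add]
  refine mul_le_mul_of_nonneg_left (Real.exp_le_exp.2 ?_) hc
  have h1 : ∑ i, |(z - k⁻¹ • (y + u)) i| ≤
      ∑ i, |(z - k⁻¹ • (x + u)) i| + k⁻¹ * ∑ i, |x i - y i| := by
    rw [Finset.mul_sum, ← Finset.sum_add_distrib]
    refine Finset.sum_le_sum fun i _ => ?_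
    have : (z - k⁻¹ • (y + u)) i = (z - k⁻¹ • (x + u)) i + k⁻¹ * (x i - y i) := by
      simp; ring
    rw [this]
    refine (abs_add_le _ _).trans ?_
    rw [abs_mul, abs_of_pos (inv_pos.2 hk)]
  have h2 : k⁻¹ * ∑ i, |x i - y i| ≤ k⁻¹ * 1 :=
    mul_le_mul_of_nonneg_left h (inv_pos.2 hk).le
  have h3 : 1 / (k * σ) = k⁻¹ / σ := by field_simp
  rw [h3, ← add_div]
  gcongr
  linarith

lemma laplacian_nonneg (d : ℕ) (σ : ℝ) (hσ : 0 < σ) (z : Fin d → ℝ) :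
    0 ≤ laplacianDensity d σ z := by
  unfold laplacianDensity
  positivity

lemma mixup_key (d : ℕ) (σ : ℝ) (hσ : 0 < σ) (E : Finset (Fin d → ℝ)) (x₀ : Fin d → ℝ)
    (hx : x₀ ∉ E) (hdiam : ∀ y ∈ E, ∑ i, |x₀ i - y i| ≤ 1) (j : ℕ) (hj : j + 1 ≤ E.card)
    (z : Fin d → ℝ) (n k c : ℝ) (hn : n = E.card + 1) (hk : k = j + 1) (hc : c = 1 / (k * σ)) :
    n * mixupDensity d σ (j + 1) (insert x₀ E) z ≤
      (n - k + k * Real.exp c) * mixupDensity d σ (j + 1) E z ∧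
    (n - k + k * Real.exp (-c)) * mixupDensity d σ (j + 1) E z ≤
      n * mixupDensity d σ (j + 1) (insert x₀ E) z := by
  set f : Finset (Fin d → ℝ) → ℝ :=
    fun S => laplacianDensity d σ (z - k⁻¹ • ∑ x ∈ S, x) with hf
  have hkpos : 0 < k := by rw [hk]; positivity
  set X := ∑ S ∈ E.powersetCard (j + 1), f S with hX
  set Y := ∑ T ∈ E.powersetCard j, f (insert x₀ T) with hY
  have hjE : (j : ℝ) + 1 ≤ E.card := by exact_mod_cast hj
  have hdc := mixup_double_count E j f
  have hcard : ∀ T ∈ E.powersetCard j, ((E \ T).card : ℝ) = n - k := by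
    intro T hT
    rw [Finset.mem_powersetCard] at hT
    have h := Finset.card_sdiff_add_card_eq_card hT.1
    have h' : ((E \ T).card : ℝ) + T.card = E.card := by exact_mod_cast h
    rw [hT.2] at h'
    rw [hn, hk]; linarith
  have hYs : (n - k) * Y = ∑ T ∈ E.powersetCard j, ∑ y ∈ E \ T, f (insert x₀ T) := by
    rw [hY, Finset.mul_sum]
    refine Finset.sum_congr rfl fun T hT => ?_
    rw [Finset.sum_const, nsmul_eq_mul, hcard T hT]
  have hins : ∀ T ∈ E.powersetCard j, ∀ y ∈ E \ T,
      f (insert x₀ T) ≤ Real.exp c * f (insert y T) ∧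
      Real.exp (-c) * f (insert y T) ≤ f (insert x₀ T) := by
    intro T hT y hy
    rw [Finset.mem_powersetCard] at hT
    rw [Finset.mem_sdiff] at hy
    have hxT : x₀ ∉ T := fun h => hx (hT.1 h)
    simp only [hf, Finset.sum_insert hxT, Finset.sum_insert hy.2]
    have hd1 := hdiam y hy.1
    have hd2 : ∑ i, |y i - x₀ i| ≤ 1 := by
      simpa only [abs_sub_comm] using hd1
    refine ⟨hc ▸ laplacian_shift d σ hσ k hkpos _ _ _ z hd1, ?_⟩
    have h2 := laplacian_shift d σ hσ k hkpos (∑ x ∈ T, x) _ _ z hd2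
    rw [← hc] at h2
    rw [Real.exp_neg, inv_mul_le_iff₀ (Real.exp_pos _)]
    exact h2
  have hup : (n - k) * Y ≤ Real.exp c * (k * X) := by
    rw [hYs, hk, ← hdc, Finset.mul_sum]
    refine Finset.sum_le_sum fun T hT => ?_
    rw [Finset.mul_sum]
    exact Finset.sum_le_sum fun y hy => (hins T hT y hy).1
  have hlo : Real.exp (-c) * (k * X) ≤ (n - k) * Y := by
    rw [hYs, hk, ← hdc, Finset.mul_sum]
    refine Finset.sum_le_sum fun T hT => ?_
    rw [Finset.mul_sum]
    exact Finset.sum_le_sum fun y hy => (hins T hT y hy).2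
  have hsplit : ∑ S ∈ (insert x₀ E).powersetCard (j + 1), f S = X + Y := by
    rw [Finset.powersetCard_succ_insert hx, Finset.sum_union, Finset.sum_image]
    · intro S hS T hT h
      simp only [Finset.mem_coe, Finset.mem_powersetCard] at hS hT
      have hS' : x₀ ∉ S := fun h => hx (hS.1 h)
      have hT' : x₀ ∉ T := fun h => hx (hT.1 h)
      rw [← Finset.erase_insert hS', ← Finset.erase_insert hT', h]
    · rw [Finset.disjoint_left]
      intro S hS hS2
      rw [Finset.mem_image] at hS2
      obtain ⟨T, _, rfl⟩ := hS2
      rw [Finset.mem_powersetCard] at hS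
      exact hx (hS.1 (Finset.mem_insert_self _ _))
  have hkc : ((j + 1 : ℕ) : ℝ) = k := by rw [hk]; push_cast; rfl
  have hq : mixupDensity d σ (j + 1) E z = ((E.card.choose (j + 1) : ℝ))⁻¹ * X := by
    unfold mixupDensity
    rw [hkc]
  have hp : mixupDensity d σ (j + 1) (insert x₀ E) z =
      (((E.card + 1).choose (j + 1) : ℝ))⁻¹ * (X + Y) := by
    unfold mixupDensity
    rw [hkc, ← hsplit, Finset.card_insert_of_notMem hx]
  have hch : (E.card.choose (j + 1) : ℝ) * n = ((E.card + 1).choose (j + 1) : ℝ) * (n - k) := by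
    have h := Nat.choose_mul_succ_eq E.card (j + 1)
    have h' : (E.card.choose (j + 1) : ℝ) * (E.card + 1 : ℕ) =
      ((E.card + 1).choose (j + 1) : ℝ) * ((E.card + 1 - (j + 1) : ℕ) : ℝ) := by exact_mod_cast h
    rw [Nat.cast_sub (by omega)] at h'
    rw [hn, hk]
    push_cast at h'
    exact h'
  have hN : (0 : ℝ) < E.card.choose (j + 1) := by exact_mod_cast Nat.choose_pos hj
  have hM : (0 : ℝ) < (E.card + 1).choose (j + 1) := by
    exact_mod_cast Nat.choose_pos (by omega)
  have hpn : n * mixupDensity d σ (j + 1) (insert x₀ E) z =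
      (E.card.choose (j + 1) : ℝ)⁻¹ * ((n - k) * X + (n - k) * Y) := by
    rw [hp]
    field_simp
    linear_combination (X + Y) * hch
  rw [hpn, hq]
  constructor
  · rw [mul_left_comm]
    refine mul_le_mul_of_nonneg_left ?_ (inv_pos.2 hN).le
    linarith
  · rw [mul_left_comm]
    refine mul_le_mul_of_nonneg_left ?_ (inv_pos.2 hN).le
    linarith

lemma mixupLaw_le (d : ℕ) (σ : ℝ) (k : ℕ) (P Q : Finset (Fin d → ℝ)) (a : ℝ) (ha : 0 ≤ a)
    (h : ∀ z, mixupDensity d σ k P z ≤ a * mixupDensity d σ k Q z)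
    (U : Set (Fin d → ℝ)) (hU : MeasurableSet U) :
    mixupLaw d σ k P U ≤ ENNReal.ofReal a * mixupLaw d σ k Q U := by
  unfold mixupLaw
  rw [withDensity_apply _ hU, withDensity_apply _ hU,
    ← lintegral_const_mul' _ _ ENNReal.ofReal_ne_top]
  refine lintegral_mono fun z => ?_
  simp only []
  rw [← ENNReal.ofReal_mul ha]
  exact ENNReal.ofReal_le_ofReal (h z)

/-- A single draw of the mixup-plus-Laplacian-noise mechanism on a dataset of ℓ¹
diameter at most 1 satisfies `μ_D(U) ≤ e^A·μ_{D'}(U)` and `μ_{D'}(U) ≤ e^B·μ_D(U)`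
for every measurable `U`, where `A = log(1 − k/n + exp(1/(kσ))·k/n)` and
`B = log(n/(n − k + k·exp(−1/(kσ))))`; i.e., (max{A,B}, 0)-differential privacy with
respect to removing `x₀`. -/
theorem mixup_mechanism_single_draw_dp
    (d : ℕ) (hd : 1 ≤ d) (σ : ℝ) (hσ : 0 < σ)
    (D : Finset (Fin d → ℝ)) (n : ℕ) (hn : D.card = n)
    (hdiam : ∀ x ∈ D, ∀ y ∈ D, ∑ i, |x i - y i| ≤ 1)
    (x₀ : Fin d → ℝ) (hx₀ : x₀ ∈ D)
    (k : ℕ) (hk1 : 1 ≤ k) (hkn : k ≤ n - 1)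
    (A B : ℝ)
    (hA : A = Real.log (1 - (k : ℝ) / n + Real.exp (1 / (k * σ)) * ((k : ℝ) / n)))
    (hB : B = Real.log ((n : ℝ) / ((n : ℝ) - k + k * Real.exp (-(1 / (k * σ))))))
    (U : Set (Fin d → ℝ)) (hU : MeasurableSet U) :
    mixupLaw d σ k D U ≤ ENNReal.ofReal (Real.exp A) * mixupLaw d σ k (D.erase x₀) U ∧
    mixupLaw d σ k (D.erase x₀) U ≤ ENNReal.ofReal (Real.exp B) * mixupLaw d σ k D U := by
  obtain ⟨j, rfl⟩ : ∃ j, k = j + 1 := ⟨k - 1, by omega⟩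
  have hcE : (D.erase x₀).card = n - 1 := by rw [Finset.card_erase_of_mem hx₀, hn]
  have hnE : (n : ℝ) = (D.erase x₀).card + 1 := by
    rw [hcE]
    have : n = (n - 1) + 1 := by omega
    exact_mod_cast this
  have key := fun z => mixup_key d σ hσ (D.erase x₀) x₀ (Finset.notMem_erase _ _)
    (fun y hy => hdiam x₀ hx₀ y (Finset.mem_of_mem_erase hy)) j (by omega) z n ((j + 1 : ℕ) : ℝ)
    _ hnE (by push_cast; rfl) rfl
  rw [Finset.insert_erase hx₀] at key
  have hkpos : (0 : ℝ) < ((j + 1 : ℕ) : ℝ) := by positivity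
  have hkn' : ((j + 1 : ℕ) : ℝ) < n := by
    have : j + 1 < n := by omega
    exact_mod_cast this
  set k : ℝ := ((j + 1 : ℕ) : ℝ) with hk
  have hnpos : (0 : ℝ) < n := hkpos.trans hkn'
  have hnum : ∀ c : ℝ, 0 < (n : ℝ) - k + k * Real.exp c := fun c =>
    add_pos (sub_pos.2 hkn') (mul_pos hkpos (Real.exp_pos c))
  have hAe : Real.exp A = ((n : ℝ) - k + k * Real.exp (1 / (k * σ))) / n := by
    have h : 1 - k / n + Real.exp (1 / (k * σ)) * (k / n) =
        ((n : ℝ) - k + k * Real.exp (1 / (k * σ))) / n := by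
      field_simp
    rw [hA, h, Real.exp_log (div_pos (hnum _) hnpos)]
  have hBe : Real.exp B = (n : ℝ) / ((n : ℝ) - k + k * Real.exp (-(1 / (k * σ)))) := by
    rw [hB, Real.exp_log (div_pos hnpos (hnum _))]
  constructor
  · refine mixupLaw_le d σ _ _ _ _ (Real.exp_pos _).le (fun z => ?_) U hU
    rw [hAe, div_mul_eq_mul_div, le_div_iff₀ hnpos, mul_comm]
    exact (key z).1
  · refine mixupLaw_le d σ _ _ _ _ (Real.exp_pos _).le (fun z => ?_) U hU
    rw [hBe, div_mul_eq_mul_div, le_div_iff₀ (hnum _), mul_comm]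
    exact (key z).2
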